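/- Let E = ℝ^d with the Euclidean inner product and norm, let γ > 0, L > 0, μ > 0, σ* ≥ 0, β₁ > 0, and for each t ∈ ℕ let G_t : E → E be an L-Lipschitz and μ-strongly monotone operator with ‖G_t(z*)‖ ≤ σ* for a fixed point z* ∈ E. Let the sequences (z_t) and (w_t) in E satisfy w_t = z_t - γ G_t(z_t) and z_{t+1} = z_t - γ G_t(w_t) for all t. Then for every τ ∈ ℕ and every t ≥ τ, ‖z_{t+1} - z*‖² ≤ ‖z_t - z*‖² - 2γμ‖w_t - z*‖² - 2γ⟨G_t(z*), w_{t-τ} - z*⟩ + (γ/β₁)·σ*² + γ(1+γL)²β₁·(Σ_{k=0}^{τ} ‖w_{t-k} - z_{t-k}‖)² + γ²L²‖w_t - z_t‖² - ‖w_t - z_t‖². -/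

import Mathlib

open InnerProductSpace

/-!
Expanding the square around `w t` leaves only the error `γ ^ 2 * ‖G t (w t) - G t (z t)‖ ^ 2`, which
the Lipschitz bound controls, against the gain `-‖w t - z t‖ ^ 2`. Strong monotonicity bounds
`⟪G t (w t), w t - zstar⟫_ℝ` below by `μ * ‖w t - zstar‖ ^ 2 + ⟪G t zstar, w t - zstar⟫_ℝ`. Moving
`w t` back to `w (t - τ)` in the last inner product costs, by Young's inequality, multiples of
`‖G t zstar‖ ^ 2` and `‖w t - w (t - τ)‖ ^ 2`. Since `z (s + 1)` is within `γ * L * ‖w s - z s‖` of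
`w s`, that distance telescopes into a sum of extrapolation lengths `‖w s - z s‖`.
-/

theorem sum_range_add_mul_succ_le {R : Type*} [Semiring R] [PartialOrder R] [IsOrderedRing R]
    {a : ℕ → R} {c : R} (ha : ∀ k, 0 ≤ a k) (hc : 0 ≤ c) (n : ℕ) :
    ∑ k ∈ Finset.range n, (a k + c * a (k + 1)) ≤
      (1 + c) * ∑ k ∈ Finset.range (n + 1), a k := by
  rw [Finset.sum_add_distrib, ← Finset.mul_sum, add_mul, one_mul]
  refine add_le_add ?_ (mul_le_mul_of_nonneg_left ?_ hc)
  · exact Finset.sum_range_succ a n ▸ le_add_of_nonneg_right (ha n)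
  · exact Finset.sum_range_succ' a n ▸ le_add_of_nonneg_right (ha 0)

section InnerProduct

variable {E : Type*} [SeminormedAddCommGroup E] [InnerProductSpace ℝ E]

theorem two_mul_inner_le_norm_sq_div_add_mul_norm_sq (a b : E) {β : ℝ} (hβ : 0 < β) :
    2 * ⟪a, b⟫_ℝ ≤ ‖a‖ ^ 2 / β + β * ‖b‖ ^ 2 :=
  calc
    2 * ⟪a, b⟫_ℝ ≤ 2 * (‖a‖ * ‖b‖) := by gcongr; exact real_inner_le_norm a b
    _ = 2 * ‖b‖ * ‖a‖ := by ring
    _ ≤ β * ‖b‖ ^ 2 + β⁻¹ * ‖a‖ ^ 2 := two_mul_le_add_mul_sq hβ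
    _ = ‖a‖ ^ 2 / β + β * ‖b‖ ^ 2 := by ring

theorem neg_two_mul_inner_sub_le (a u v x : E) {β : ℝ} (hβ : 0 < β) :
    -2 * ⟪a, u - x⟫_ℝ ≤ -2 * ⟪a, v - x⟫_ℝ + ‖a‖ ^ 2 / β + β * ‖u - v‖ ^ 2 := by
  have young := two_mul_inner_le_norm_sq_div_add_mul_norm_sq a (v - u) hβ
  have split : ⟪a, v - u⟫_ℝ = ⟪a, v - x⟫_ℝ - ⟪a, u - x⟫_ℝ := by
    rw [← inner_sub_right, sub_sub_sub_cancel_right]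
  rw [split, norm_sub_rev v u] at young
  linarith

theorem norm_sub_smul_sub_sq (z x g h : E) (γ : ℝ) :
    ‖z - γ • h - x‖ ^ 2 =
      ‖z - x‖ ^ 2 - 2 * γ * ⟪h, z - γ • g - x⟫_ℝ + γ ^ 2 * ‖h - g‖ ^ 2 - ‖γ • g‖ ^ 2 := by
  rw [sub_right_comm z (γ • h), sub_right_comm z (γ • g), norm_sub_sq_real (z - x),
    norm_sub_sq_real h, inner_sub_right, inner_smul_right, inner_smul_right, norm_smul, norm_smul,
    mul_pow, mul_pow, Real.norm_eq_abs, sq_abs, real_inner_comm h (z - x)]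
  ring

end InnerProduct

/-- The iterates `z` and intermediate points `w` of the extrapolated gradient method for the
operators `G` with step size `γ`; the paper writes `z^{t+1/2}` for `w t`. -/
structure IsExtragradientTrajectory {E : Type*} [AddCommGroup E] [Module ℝ E] (γ : ℝ)
    (G : ℕ → E → E) (z w : ℕ → E) : Prop where
  extrapolation : ∀ t, w t = z t - γ • G t (z t)
  update : ∀ t, z (t + 1) = z t - γ • G t (w t)

namespace IsExtragradientTrajectory

theorem smul_eq_sub_extrapolation {E : Type*} [AddCommGroup E] [Module ℝ E] {γ : ℝ}
    {G : ℕ → E → E} {z w : ℕ → E} (h : IsExtragradientTrajectory γ G z w) (t : ℕ) :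
    γ • G t (z t) = z t - w t := by
  rw [h.extrapolation t, sub_sub_cancel]

section NormedSpace

variable {E : Type*} [SeminormedAddCommGroup E] [NormedSpace ℝ E] {γ : ℝ} {L : NNReal}
  {G : ℕ → E → E} {z w : ℕ → E}

theorem norm_update_sub_extrapolation_le (h : IsExtragradientTrajectory γ G z w) (hγ : 0 ≤ γ)
    {t : ℕ} (hLip : LipschitzWith L (G t)) :
    ‖z (t + 1) - w t‖ ≤ γ * L * ‖w t - z t‖ :=
  calc
    ‖z (t + 1) - w t‖ = ‖γ • (G t (z t) - G t (w t))‖ := by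
      rw [h.update t, smul_sub, h.smul_eq_sub_extrapolation t, sub_right_comm]
    _ = γ * ‖G t (w t) - G t (z t)‖ := by
      rw [norm_smul, Real.norm_of_nonneg hγ, norm_sub_rev]
    _ ≤ γ * (L * ‖w t - z t‖) := by gcongr; exact hLip.norm_sub_le _ _
    _ = γ * L * ‖w t - z t‖ := (mul_assoc _ _ _).symm

theorem dist_extrapolation_succ_le (h : IsExtragradientTrajectory γ G z w) (hγ : 0 ≤ γ)
    {t : ℕ} (hLip : LipschitzWith L (G t)) :
    dist (w (t + 1)) (w t) ≤ ‖w (t + 1) - z (t + 1)‖ + γ * L * ‖w t - z t‖ :=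
  calc
    dist (w (t + 1)) (w t) ≤ ‖w (t + 1) - z (t + 1)‖ + ‖z (t + 1) - w t‖ := by
      simpa only [dist_eq_norm] using dist_triangle (w (t + 1)) (z (t + 1)) (w t)
    _ ≤ ‖w (t + 1) - z (t + 1)‖ + γ * L * ‖w t - z t‖ := by
      gcongr
      exact h.norm_update_sub_extrapolation_le hγ hLip

theorem norm_extrapolation_sub_le_sum (h : IsExtragradientTrajectory γ G z w) (hγ : 0 ≤ γ)
    (hLip : ∀ t, LipschitzWith L (G t)) {τ t : ℕ} (ht : τ ≤ t) :
    ‖w t - w (t - τ)‖ ≤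
      (1 + γ * L) * ∑ k ∈ Finset.range (τ + 1), ‖w (t - k) - z (t - k)‖ := by
  have step_le : ∀ k < τ, dist (w (t - k)) (w (t - (k + 1))) ≤
      ‖w (t - k) - z (t - k)‖ + γ * L * ‖w (t - (k + 1)) - z (t - (k + 1))‖ := by
    intro k hk
    obtain ⟨s, hs⟩ : ∃ s, t - k = s + 1 := Nat.exists_eq_add_one.mpr (by lia)
    have hs' : t - (k + 1) = s := by lia
    rw [hs, hs']
    exact h.dist_extrapolation_succ_le hγ (hLip s)
  calc
    ‖w t - w (t - τ)‖ = dist (w t) (w (t - τ)) := (dist_eq_norm _ _).symm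
    _ ≤ ∑ k ∈ Finset.range τ,
        (‖w (t - k) - z (t - k)‖ + γ * L * ‖w (t - (k + 1)) - z (t - (k + 1))‖) :=
      dist_le_range_sum_of_dist_le (f := fun k => w (t - k)) τ (step_le _)
    _ ≤ (1 + γ * L) * ∑ k ∈ Finset.range (τ + 1), ‖w (t - k) - z (t - k)‖ :=
      sum_range_add_mul_succ_le (fun _ => norm_nonneg _) (by positivity) τ

end NormedSpace

section InnerProductSpace

variable {E : Type*} [SeminormedAddCommGroup E] [InnerProductSpace ℝ E] {γ : ℝ}
  {G : ℕ → E → E} {z w : ℕ → E}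

theorem norm_update_sub_sq (h : IsExtragradientTrajectory γ G z w) (t : ℕ) (x : E) :
    ‖z (t + 1) - x‖ ^ 2 =
      ‖z t - x‖ ^ 2 - 2 * γ * ⟪G t (w t), w t - x⟫_ℝ
        + γ ^ 2 * ‖G t (w t) - G t (z t)‖ ^ 2 - ‖w t - z t‖ ^ 2 := by
  have expansion := norm_sub_smul_sub_sq (z t) x (G t (z t)) (G t (w t)) γ
  rwa [← h.update t, h.smul_eq_sub_extrapolation t, sub_sub_cancel, norm_sub_rev (z t) (w t)]
    at expansion

theorem norm_update_sub_sq_le (h : IsExtragradientTrajectory γ G z w) (hγ : 0 ≤ γ)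
    {L : NNReal} {μ : ℝ} {t : ℕ} {x : E} (hLip : LipschitzWith L (G t))
    (hMon : ∀ y, μ * ‖y - x‖ ^ 2 ≤ ⟪G t y - G t x, y - x⟫_ℝ) :
    ‖z (t + 1) - x‖ ^ 2 ≤
      ‖z t - x‖ ^ 2 - 2 * γ * μ * ‖w t - x‖ ^ 2 - 2 * γ * ⟪G t x, w t - x⟫_ℝ
        + γ ^ 2 * L ^ 2 * ‖w t - z t‖ ^ 2 - ‖w t - z t‖ ^ 2 := by
  have mono : γ * (μ * ‖w t - x‖ ^ 2) ≤ γ * (⟪G t (w t), w t - x⟫_ℝ - ⟪G t x, w t - x⟫_ℝ) := by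
    rw [← inner_sub_left]
    gcongr
    exact hMon (w t)
  have lip : γ ^ 2 * ‖G t (w t) - G t (z t)‖ ^ 2 ≤ γ ^ 2 * (L * ‖w t - z t‖) ^ 2 := by
    gcongr
    exact hLip.norm_sub_le _ _
  rw [h.norm_update_sub_sq t x]
  linarith

end InnerProductSpace

end IsExtragradientTrajectory

theorem extragradient_per_iteration_bound_general {E : Type*} [SeminormedAddCommGroup E]
    [InnerProductSpace ℝ E] {γ μ σ β : ℝ} {L : NNReal} {G : ℕ → E → E} {z w : ℕ → E} {x : E}
    {τ t : ℕ} (h : IsExtragradientTrajectory γ G z w) (hγ : 0 ≤ γ) (hβ : 0 < β)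
    (hLip : ∀ s, LipschitzWith L (G s))
    (hMon : ∀ y, μ * ‖y - x‖ ^ 2 ≤ ⟪G t y - G t x, y - x⟫_ℝ)
    (hbound : ‖G t x‖ ≤ σ) (ht : τ ≤ t) :
    ‖z (t + 1) - x‖ ^ 2 ≤
      ‖z t - x‖ ^ 2 - 2 * γ * μ * ‖w t - x‖ ^ 2 - 2 * γ * ⟪G t x, w (t - τ) - x⟫_ℝ
        + (γ / β) * σ ^ 2
        + γ * (1 + γ * L) ^ 2 * β *
            (∑ k ∈ Finset.range (τ + 1), ‖w (t - k) - z (t - k)‖) ^ 2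
        + γ ^ 2 * L ^ 2 * ‖w t - z t‖ ^ 2 - ‖w t - z t‖ ^ 2 := by
  set S := ∑ k ∈ Finset.range (τ + 1), ‖w (t - k) - z (t - k)‖
  have descent := h.norm_update_sub_sq_le hγ (hLip t) hMon
  have step_back : -2 * ⟪G t x, w t - x⟫_ℝ ≤
      -2 * ⟪G t x, w (t - τ) - x⟫_ℝ + σ ^ 2 / β + β * ((1 + γ * L) * S) ^ 2 := by
    refine (neg_two_mul_inner_sub_le (G t x) (w t) (w (t - τ)) x hβ).trans ?_
    gcongr
    exact h.norm_extrapolation_sub_le_sum hγ hLip ht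
  linear_combination descent + γ * step_back

/-- Combined per-iteration bound from the proof of Theorem 1 (before taking
expectations). -/
theorem extragradient_per_iteration_bound
    (d : ℕ) (γ L μ σstar β₁ : ℝ)
    (hγ : 0 < γ) (hL : 0 < L) (hμ : 0 < μ) (hσ : 0 ≤ σstar) (hβ₁ : 0 < β₁)
    (G : ℕ → EuclideanSpace ℝ (Fin d) → EuclideanSpace ℝ (Fin d))
    (zstar : EuclideanSpace ℝ (Fin d))
    (hLip : ∀ (t : ℕ) (z' z'' : EuclideanSpace ℝ (Fin d)),
      ‖G t z' - G t z''‖ ≤ L * ‖z' - z''‖)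
    (hMon : ∀ (t : ℕ) (z' z'' : EuclideanSpace ℝ (Fin d)),
      μ * ‖z' - z''‖ ^ 2 ≤ ⟪G t z' - G t z'', z' - z''⟫_ℝ)
    (hbound : ∀ t : ℕ, ‖G t zstar‖ ≤ σstar)
    (z w : ℕ → EuclideanSpace ℝ (Fin d))
    (hw : ∀ t, w t = z t - γ • G t (z t))
    (hz : ∀ t, z (t + 1) = z t - γ • G t (w t))
    (τ t : ℕ) (ht : τ ≤ t) :
    ‖z (t + 1) - zstar‖ ^ 2 ≤
      ‖z t - zstar‖ ^ 2 - 2 * γ * μ * ‖w t - zstar‖ ^ 2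
        - 2 * γ * ⟪G t zstar, w (t - τ) - zstar⟫_ℝ
        + (γ / β₁) * σstar ^ 2
        + γ * (1 + γ * L) ^ 2 * β₁ *
            (∑ k ∈ Finset.range (τ + 1), ‖w (t - k) - z (t - k)‖) ^ 2
        + γ ^ 2 * L ^ 2 * ‖w t - z t‖ ^ 2 - ‖w t - z t‖ ^ 2 := by
  lift L to NNReal using hL.le
  exact extragradient_per_iteration_bound_general ⟨hw, hz⟩ hγ.le hβ₁
    (fun s => lipschitzWith_iff_norm_sub_le.mpr (hLip s)) (fun y => hMon t y zstar) (hbound t) ht
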